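/- Let γ ∈ ℤ[i] be squarefree (in particular nonzero), and let E_{γ²} be the elliptic curve over ℚ(i) given by y² = x³ + γ²x. Then the torsion subgroup of E_{γ²}(ℚ(i)) is isomorphic to ℤ/2ℤ ⊕ ℤ/4ℤ if γ = i or γ = −i, and is isomorphic to ℤ/2ℤ ⊕ ℤ/2ℤ otherwise. -/

import Mathlib

noncomputable section

open WeierstrassCurve
open scoped IntermediateField

/-- The field `ℚ(i)`, realized as the subfield of `ℂ` generated by `Complex.I` over `ℚ`. -/
abbrev QI : IntermediateField ℚ ℂ := ℚ⟮Complex.I⟯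

/-- The imaginary unit `i` as an element of `ℚ(i)`. -/
def QIi : QI := ⟨Complex.I, IntermediateField.mem_adjoin_simple_self ℚ Complex.I⟩

/-- The imaginary unit `i` as a Gaussian integer, so `ℤ[i] = ℤ + ℤ·gi`. -/
def gi : GaussianInt := ⟨0, 1⟩

/-- The canonical embedding `ℤ[i] → ℚ(i)`, sending `a + b·i` to `a + b·i`. -/
def toQI (z : GaussianInt) : QI := (z.re : QI) + (z.im : QI) * QIi

/-- The (Weierstrass model of the) elliptic curve `Eα : y² = x³ + α x` over `ℚ(i)`. -/
def Ecurve (α : QI) : WeierstrassCurve QI := ⟨0, 0, 0, α, 0⟩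

/-- A Gaussian prime congruent to `-1 - 6i` modulo `16`. -/
def GoodPrime (π : GaussianInt) : Prop :=
  Prime π ∧ (16 : GaussianInt) ∣ (π - (-1 - 6 * gi))

/-!
Normalise a point of `y² = x³ + g²x` by `u = x / g`, so that doubling acts on `u` as
`u ↦ (u² - 1)² / (4u(u² + 1))`, whatever `g` is. Let `v` be a valuation with `v 2 < 1`. If
`v u > 1`, doubling divides `v u` by `v 4`, so the multiples of the point have unbounded values and
the point has infinite order; if `v u < 1` and `u ≠ 0`, doubling leads into that case. Hence a
torsion point has `u = 0` or `v u = 1`. For the `(1 + i)`-adic valuation of `ℚ(i)` the fourth power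
of a unit is `1` modulo `8(1 + i)`, and this prevents the double of a point with `v u = 1` from
having value `1` again. So every torsion point satisfies `2P = 0` or `2P = (0, 0)`, and the torsion
subgroup is determined by whether `(0, 0)` can be halved, that is, by whether `2g³` is a square.
For squarefree `γ` the number `2γ³` is a square in `ℚ(i)` exactly when `-iγ` is,
which forces `γ = ±i`.
-/

section TorsionGroup

open AddSubgroup

variable {G : Type*} [AddCommGroup G]

lemma not_isOfFinAddOrder_of_lt_two_nsmul {M Γ : Type*} [AddMonoid M] [Preorder Γ] {f : M → Γ}
    {c : Γ} (hf : ∀ Q, c < f Q → f Q < f (2 • Q)) {P : M} (hP : c < f P) :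
    ¬ IsOfFinAddOrder P := by
  intro hfin
  have hS : {Q ∈ (AddSubmonoid.multiples P : Set M) | c < f Q}.Finite :=
    hfin.finite_multiples.subset (Set.sep_subset _ _)
  obtain ⟨Q, ⟨hQ, hcQ⟩, hmax⟩ :=
    hS.exists_maximalFor f _ ⟨P, AddSubmonoid.mem_multiples P, hP⟩
  have hlt := hf Q hcQ
  exact hlt.not_ge (hmax ⟨nsmul_mem hQ 2, hcQ.trans hlt⟩ hlt.le)

lemma nonempty_addEquiv_zmod_prod_zmod {s t : G} {m n : ℕ} {H : AddSubgroup G}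
    (hs : addOrderOf s = m) (ht : addOrderOf t = n)
    (hdisj : Disjoint (zmultiples s) (zmultiples t)) (hH : zmultiples s ⊔ zmultiples t = H) :
    Nonempty (H ≃+ ZMod m × ZMod n) := by
  subst hs ht
  let φ : zmultiples s × zmultiples t →+ G := (zmultiples s).subtype.coprod (zmultiples t).subtype
  have hφ : Function.Injective φ := by
    rw [injective_iff_map_eq_zero]
    rintro ⟨a, b⟩ hab
    simpa [Prod.ext_iff] using disjoint_iff_add_eq_zero.1 hdisj a.2 b.2 hab
  have hrange : φ.range = H := by
    ext x
    simp only [← hH, mem_sup, AddMonoidHom.mem_range, Prod.exists, φ, AddMonoidHom.coprod_apply,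
      coe_subtype, Subtype.exists, exists_prop]
  have e (a : G) : zmultiples a ≃+ ZMod (addOrderOf a) :=
    Nat.card_zmultiples a ▸
      (zmodAddCyclicAddEquiv (inferInstance : IsAddCyclic (zmultiples a))).symm
  exact ⟨((AddMonoidHom.ofInjective hφ).trans (AddEquiv.addSubgroupCongr hrange)).symm.trans
    ((e s).prodCongr (e t))⟩

lemma disjoint_zmultiples_of_two_nsmul_eq_zero {t : G} {H : AddSubgroup G} (h2 : 2 • t = 0)
    (ht : t ∉ H) : Disjoint (zmultiples t) H := by
  rw [AddSubgroup.disjoint_def]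
  rintro _ ⟨k, rfl⟩ hk
  obtain ⟨m, rfl | rfl⟩ := k.even_or_odd'
  · simp [mul_comm 2 m, mul_zsmul, ofNat_zsmul, h2]
  · exact absurd (by simpa [add_zsmul, mul_comm 2 m, mul_zsmul, ofNat_zsmul, h2] using hk) ht

lemma nonempty_torsion_addEquiv_zmod_two_prod_zmod {t p : G} {n : ℕ} [NeZero n]
    (ht : addOrderOf t = 2) (hp : addOrderOf p = n) (htp : t ∉ zmultiples p)
    (htors : ∀ P : G, IsOfFinAddOrder P → P ∈ zmultiples t ⊔ zmultiples p) :
    Nonempty (AddCommGroup.torsion G ≃+ ZMod 2 × ZMod n) := by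
  have ht_fin : IsOfFinAddOrder t := addOrderOf_pos_iff.1 (ht ▸ two_pos)
  have hp_fin : IsOfFinAddOrder p := addOrderOf_pos_iff.1 (hp ▸ NeZero.pos n)
  have hsup : zmultiples t ⊔ zmultiples p = AddCommGroup.torsion G :=
    le_antisymm (sup_le (zmultiples_le_of_mem ht_fin) (zmultiples_le_of_mem hp_fin)) htors
  have hdisj := disjoint_zmultiples_of_two_nsmul_eq_zero (ht ▸ addOrderOf_nsmul_eq_zero t) htp
  exact nonempty_addEquiv_zmod_prod_zmod ht hp hdisj hsup

lemma notMem_zmultiples_of_addOrderOf_eq_two {s t : G} (hs : addOrderOf s = 2)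
    (ht : addOrderOf t = 2) (hst : s ≠ t) : t ∉ zmultiples s := by
  have ht0 : t ≠ 0 := by rintro rfl; simp at ht
  have hs2 : 2 • s = 0 := hs ▸ addOrderOf_nsmul_eq_zero s
  rintro ⟨k, rfl⟩
  obtain ⟨m, rfl | rfl⟩ := k.even_or_odd'
  · simp [mul_comm 2 m, mul_zsmul, ofNat_zsmul, hs2] at ht0
  · simp [add_zsmul, mul_comm 2 m, mul_zsmul, ofNat_zsmul, hs2] at hst

lemma nonempty_torsion_addEquiv_zmod_two_prod_zmod_two {s t : G} (hs : addOrderOf s = 2)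
    (ht : addOrderOf t = 2) (hst : s ≠ t)
    (h2 : ∀ P : G, 2 • P = 0 → P ∈ zmultiples t ⊔ zmultiples s)
    (htors : ∀ P : G, IsOfFinAddOrder P → 2 • P = 0) :
    Nonempty (AddCommGroup.torsion G ≃+ ZMod 2 × ZMod 2) :=
  nonempty_torsion_addEquiv_zmod_two_prod_zmod ht hs
    (notMem_zmultiples_of_addOrderOf_eq_two hs ht hst) fun P hP ↦ h2 P (htors P hP)

lemma notMem_zmultiples_of_two_nsmul_eq {s t p : G} (hs : addOrderOf s = 2)
    (ht : addOrderOf t = 2) (hst : s ≠ t) (hp : 2 • p = s) : t ∉ zmultiples p := by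
  rintro ⟨k, rfl⟩
  have hk : k • s = 0 := by
    rw [← hp, smul_comm]
    exact ht ▸ addOrderOf_nsmul_eq_zero (k • p)
  obtain ⟨m, rfl⟩ : 2 ∣ k := by simpa [hs] using addOrderOf_dvd_iff_zsmul_eq_zero.2 hk
  refine notMem_zmultiples_of_addOrderOf_eq_two hs ht hst ⟨m, ?_⟩
  simp [← hp, mul_comm 2 m, mul_zsmul, ofNat_zsmul]

lemma addOrderOf_eq_four_of_two_nsmul {s p : G} (hs : addOrderOf s = 2) (hp : 2 • p = s) :
    addOrderOf p = 4 := by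
  refine addOrderOf_eq_prime_pow (p := 2) (n := 1) ?_ ?_
  · rw [pow_one, hp]
    rintro rfl
    simp at hs
  · rw [pow_succ, pow_one, mul_nsmul, hp]
    exact hs ▸ addOrderOf_nsmul_eq_zero s

lemma nonempty_torsion_addEquiv_zmod_two_prod_zmod_four {s t p : G} (hs : addOrderOf s = 2)
    (ht : addOrderOf t = 2) (hst : s ≠ t) (hp : 2 • p = s)
    (h2 : ∀ P : G, 2 • P = 0 → P ∈ zmultiples t ⊔ zmultiples s)
    (htors : ∀ P : G, IsOfFinAddOrder P → 2 • P = 0 ∨ 2 • P = s) :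
    Nonempty (AddCommGroup.torsion G ≃+ ZMod 2 × ZMod 4) := by
  have hp4 : addOrderOf p = 4 := addOrderOf_eq_four_of_two_nsmul hs hp
  have hle : zmultiples t ⊔ zmultiples s ≤ zmultiples t ⊔ zmultiples p :=
    sup_le_sup_left (zmultiples_le_of_mem (hp ▸ nsmul_mem (mem_zmultiples p) 2)) _
  refine nonempty_torsion_addEquiv_zmod_two_prod_zmod ht hp4
    (notMem_zmultiples_of_two_nsmul_eq hs ht hst hp) fun P hP ↦ ?_
  rcases htors P hP with hP2 | hP2
  · exact hle (h2 P hP2)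
  · rw [← sub_add_cancel P p]
    exact add_mem (hle (h2 _ (by rw [smul_sub, hP2, hp, sub_self])))
      (mem_sup_right (mem_zmultiples p))

end TorsionGroup

section Curve

variable {K : Type*} [Field K]

/-- The curve `y² = x³ + αx` over an arbitrary field, the quartic twist by `α` of `y² = x³ + x`. -/
def quarticTwist (α : K) : WeierstrassCurve K := ⟨0, 0, 0, α, 0⟩

lemma quarticTwist_equation_iff {α x y : K} :
    (quarticTwist α).toAffine.Equation x y ↔ y ^ 2 = x ^ 3 + α * x := by
  simp [quarticTwist, Affine.equation_iff]

lemma quarticTwist_negY {α x y : K} : (quarticTwist α).toAffine.negY x y = -y := by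
  simp [quarticTwist, Affine.negY]

lemma two_nsmul_some_zero [DecidableEq K] {α x : K}
    (h : (quarticTwist α).toAffine.Nonsingular x 0) : 2 • Affine.Point.some x 0 h = 0 := by
  rw [two_nsmul]
  exact Affine.Point.add_self_of_Y_eq (by rw [quarticTwist_negY, neg_zero])

lemma addOrderOf_some_zero [DecidableEq K] {α x : K}
    (h : (quarticTwist α).toAffine.Nonsingular x 0) :
    addOrderOf (Affine.Point.some x 0 h) = 2 :=
  addOrderOf_eq_prime (two_nsmul_some_zero h) (Affine.Point.some_ne_zero h)

/-- The map `x(P) / g ↦ x(2P) / g` on the curve `y² = x³ + g²x`; the normalisation by `g` makes it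
independent of `g`. It takes the junk value `0` when `2P` is the point at infinity. -/
def doubleX (u : K) : K := (u ^ 2 - 1) ^ 2 / (4 * u * (u ^ 2 + 1))

lemma div_eq_doubleX {g x y x' : K} (hg : g ≠ 0) (heq : y ^ 2 = x ^ 3 + g ^ 2 * x) (hy : 2 * y ≠ 0)
    (hx' : x' * (2 * y) ^ 2 = (x ^ 2 - g ^ 2) ^ 2) : x' / g = doubleX (x / g) := by
  have hden : g ^ 3 * (4 * (x / g) * ((x / g) ^ 2 + 1)) = (2 * y) ^ 2 := by
    field_simp
    linear_combination -4 * heq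
  have hnum : g ^ 4 * ((x / g) ^ 2 - 1) ^ 2 = (x ^ 2 - g ^ 2) ^ 2 := by
    field_simp
  have hden0 := right_ne_zero_of_mul (hden ▸ pow_ne_zero 2 hy)
  rw [doubleX, div_eq_div_iff hg hden0]
  apply mul_left_cancel₀ (pow_ne_zero 3 hg)
  linear_combination x' * hden + hx' - hnum

variable [NeZero (2 : K)] {g : K}

lemma quarticTwist_nonsingular_iff {α x y : K} (hα : α ≠ 0) :
    (quarticTwist α).toAffine.Nonsingular x y ↔ y ^ 2 = x ^ 3 + α * x := by
  have hΔ : (quarticTwist α).Δ = -(2 ^ 6 * α ^ 3) := by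
    simp only [quarticTwist, Δ, b₂, b₄, b₆, b₈]
    ring
  have hΔ0 : (quarticTwist α).Δ ≠ 0 := by
    rw [hΔ]
    exact neg_ne_zero.2 (mul_ne_zero (pow_ne_zero 6 two_ne_zero) (pow_ne_zero 3 hα))
  rw [← Affine.equation_iff_nonsingular_of_Δ_ne_zero hΔ0, quarticTwist_equation_iff]

/-- The 2-torsion point `(0, 0)` of `y² = x³ + g²x`. -/
def originPoint (hg : g ≠ 0) : (quarticTwist (g ^ 2)).toAffine.Point :=
  .some 0 0 ((quarticTwist_nonsingular_iff (pow_ne_zero 2 hg)).2 (by ring))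

/-- The 2-torsion point `(ig, 0)` of `y² = x³ + g²x`, for a square root `i` of `-1`. -/
def imaginaryPoint (hg : g ≠ 0) {i : K} (hi : i ^ 2 = -1) :
    (quarticTwist (g ^ 2)).toAffine.Point :=
  .some (i * g) 0 ((quarticTwist_nonsingular_iff (pow_ne_zero 2 hg)).2
    (by linear_combination -(i * g ^ 3) * hi))

lemma some_zero_eq_originPoint (hg : g ≠ 0) {y : K}
    (h : (quarticTwist (g ^ 2)).toAffine.Nonsingular 0 y) :
    Affine.Point.some 0 y h = originPoint hg := by
  obtain rfl : y = 0 := by simpa using quarticTwist_equation_iff.1 h.1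
  rfl

lemma originPoint_ne_imaginaryPoint (hg : g ≠ 0) {i : K} (hi : i ^ 2 = -1) :
    originPoint hg ≠ imaginaryPoint hg hi := by
  have hi0 : i ≠ 0 := by rintro rfl; simp at hi
  simp [originPoint, imaginaryPoint, hg, hi0]

variable [DecidableEq K]

lemma exists_two_nsmul_some_eq {α x y : K}
    (h : (quarticTwist α).toAffine.Nonsingular x y) (hy : y ≠ 0) :
    ∃ x' y' h', 2 • Affine.Point.some x y h = Affine.Point.some x' y' h' ∧
      x' * (2 * y) ^ 2 = (x ^ 2 - α) ^ 2 := by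
  have h2y : 2 * y ≠ 0 := mul_ne_zero two_ne_zero hy
  have hne : y ≠ (quarticTwist α).toAffine.negY x y := by
    rwa [quarticTwist_negY, ← sub_ne_zero, sub_neg_eq_add, ← two_mul]
  have hslope : (quarticTwist α).toAffine.slope x x y y = (3 * x ^ 2 + α) / (2 * y) := by
    rw [Affine.slope_of_Y_ne rfl hne, quarticTwist_negY]
    simp [quarticTwist, two_mul]
  refine ⟨_, _, _, (two_nsmul _).trans (Affine.Point.add_self_of_Y_ne hne), ?_⟩
  have hx' : (quarticTwist α).toAffine.addX x x ((3 * x ^ 2 + α) / (2 * y)) =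
      ((3 * x ^ 2 + α) / (2 * y)) ^ 2 - 2 * x := by
    simp only [Affine.addX, quarticTwist]
    ring
  rw [hslope, hx', sub_mul, ← mul_pow, div_mul_cancel₀ _ h2y]
  linear_combination -8 * x * quarticTwist_equation_iff.1 h.1

lemma exists_two_nsmul_some_eq_doubleX (hg : g ≠ 0) {x y : K}
    (h : (quarticTwist (g ^ 2)).toAffine.Nonsingular x y) (hy : y ≠ 0) :
    ∃ x' y' h', 2 • Affine.Point.some x y h = Affine.Point.some x' y' h' ∧
      x' / g = doubleX (x / g) := by
  obtain ⟨x', y', h', h2P, hx'⟩ := exists_two_nsmul_some_eq h hy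
  exact ⟨x', y', h', h2P, div_eq_doubleX hg (quarticTwist_equation_iff.1 h.1)
    (mul_ne_zero two_ne_zero hy) hx'⟩

lemma imaginaryPoint_add_originPoint (hg : g ≠ 0) {i : K} (hi : i ^ 2 = -1)
    (h : (quarticTwist (g ^ 2)).toAffine.Nonsingular (-(i * g)) 0) :
    imaginaryPoint hg hi + originPoint hg = .some (-(i * g)) 0 h := by
  have hi0 : i ≠ 0 := by rintro rfl; simp at hi
  rw [imaginaryPoint, originPoint, Affine.Point.add_of_X_ne (mul_ne_zero hi0 hg)]
  simp [Affine.slope_of_X_ne (mul_ne_zero hi0 hg), quarticTwist, Affine.addX, Affine.addY,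
    Affine.negAddY, Affine.negY]

lemma mem_zmultiples_sup_zmultiples_of_two_nsmul_eq_zero (hg : g ≠ 0) {i : K} (hi : i ^ 2 = -1)
    {P : (quarticTwist (g ^ 2)).toAffine.Point} (hP : 2 • P = 0) :
    P ∈ AddSubgroup.zmultiples (imaginaryPoint hg hi) ⊔
      AddSubgroup.zmultiples (originPoint hg) := by
  have hT₀ := AddSubgroup.mem_sup_right (S := AddSubgroup.zmultiples (imaginaryPoint hg hi))
    (AddSubgroup.mem_zmultiples (originPoint hg))
  have hT₁ := AddSubgroup.mem_sup_left (T := AddSubgroup.zmultiples (originPoint hg))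
    (AddSubgroup.mem_zmultiples (imaginaryPoint hg hi))
  rcases P with _ | ⟨x, y, h⟩
  · exact zero_mem _
  obtain rfl : y = 0 := by
    by_contra hy
    obtain ⟨x', y', h', heq, -⟩ := exists_two_nsmul_some_eq h hy
    exact Affine.Point.some_ne_zero h' (heq ▸ hP)
  have hroots : x * ((x - i * g) * (x + i * g)) = 0 := by
    linear_combination -quarticTwist_equation_iff.1 h.1 - x * g ^ 2 * hi
  rcases mul_eq_zero.1 hroots with rfl | hroots
  · exact hT₀
  rcases mul_eq_zero.1 hroots with hx | hx
  · obtain rfl := sub_eq_zero.1 hx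
    exact hT₁
  · obtain rfl := eq_neg_of_add_eq_zero_left hx
    rw [← imaginaryPoint_add_originPoint hg hi]
    exact add_mem hT₁ hT₀

lemma two_nsmul_some_eq_originPoint_iff (hg : g ≠ 0) {x y : K}
    (h : (quarticTwist (g ^ 2)).toAffine.Nonsingular x y) (hy : y ≠ 0) :
    2 • Affine.Point.some x y h = originPoint hg ↔ x ^ 2 = g ^ 2 := by
  obtain ⟨x', y', h', h2P, hx'⟩ := exists_two_nsmul_some_eq h hy
  have h2y : 2 * y ≠ 0 := mul_ne_zero two_ne_zero hy
  rw [h2P]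
  constructor
  · intro hP
    obtain ⟨rfl, -⟩ := Affine.Point.some.inj hP
    simpa [sub_eq_zero] using hx'.symm
  · intro hx
    obtain rfl : x' = 0 := by simpa [hx, h2y] using hx'
    exact some_zero_eq_originPoint hg h'

lemma exists_two_nsmul_eq_originPoint_iff (hg : g ≠ 0) {i : K} (hi : i ^ 2 = -1) :
    (∃ P, 2 • P = originPoint hg) ↔ IsSquare (2 * g ^ 3) := by
  constructor
  · rintro ⟨_ | ⟨x, y, h⟩, hP⟩
    · exact absurd hP.symm (Affine.Point.some_ne_zero _)
    have hy : y ≠ 0 := by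
      rintro rfl
      exact Affine.Point.some_ne_zero _ (hP.symm.trans (two_nsmul_some_zero h))
    have heq := quarticTwist_equation_iff.1 h.1
    have hx : x ^ 2 = g ^ 2 := (two_nsmul_some_eq_originPoint_iff hg h hy).1 hP
    rcases sq_eq_sq_iff_eq_or_eq_neg.1 hx with rfl | rfl
    · exact ⟨y, by linear_combination -heq⟩
    · exact ⟨i * y, by linear_combination heq - y ^ 2 * hi⟩
  · rintro ⟨y, hy⟩
    have h : (quarticTwist (g ^ 2)).toAffine.Nonsingular g y :=
      (quarticTwist_nonsingular_iff (pow_ne_zero 2 hg)).2 (by linear_combination -hy)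
    have hy0 : y ≠ 0 := by
      rintro rfl
      exact mul_ne_zero two_ne_zero (pow_ne_zero 3 hg) (hy.trans (mul_zero 0))
    exact ⟨_, (two_nsmul_some_eq_originPoint_iff hg h hy0).2 rfl⟩

end Curve

section Valuation

variable {K Γ₀ : Type*} [Field K] [LinearOrderedCommGroupWithZero Γ₀] (v : Valuation K Γ₀) {u : K}

lemma valuation_four : v 4 = v 2 ^ 2 := by
  rw [← map_pow]
  norm_num

lemma valuation_doubleX_of_one_lt (hu : 1 < v u) : v (doubleX u) = v u / v 2 ^ 2 := by
  have hu2 : v 1 < v (u ^ 2) := by simpa using one_lt_pow₀ hu two_ne_zero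
  have hu0 : v u ≠ 0 := (zero_lt_one.trans hu).ne'
  simp only [doubleX, map_div₀, map_mul, map_pow, v.map_sub_eq_of_lt_left hu2,
    v.map_add_eq_of_lt_left hu2, valuation_four]
  field_simp

lemma valuation_doubleX_of_lt_one (hu : v u < 1) : v (doubleX u) = (v 2 ^ 2 * v u)⁻¹ := by
  have hu2 : v (u ^ 2) < v 1 := by simpa using pow_lt_one₀ zero_le hu two_ne_zero
  simp only [doubleX, map_div₀, map_mul, map_pow, v.map_sub_eq_of_lt_right hu2,
    v.map_add_eq_of_lt_right hu2, valuation_four, map_one]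
  simp

-- Otherwise `u² - 1` and `u² + 1` are both strictly smaller than their difference `2`.
lemma valuation_doubleX_ne_one (hu : v u = 1) (hu4 : v (u ^ 4 - 1) < v 2 ^ 3) :
    v (doubleX u) ≠ 1 := by
  set s := u ^ 2 - 1
  set t := u ^ 2 + 1
  have hv2 : v 2 ≤ 1 := by simpa [one_add_one_eq_two] using v.map_add 1 1
  have h2 : 0 < v 2 ^ 2 := pow_pos (zero_lt_iff.2 (by rintro h; simp [h] at hu4)) 2
  have hst : v s * v t < v 2 ^ 3 := by
    rwa [← map_mul, show s * t = u ^ 4 - 1 by ring]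
  intro h
  have hs_sq : v s ^ 2 = v 2 ^ 2 * v t := by
    simp only [doubleX, map_div₀, map_mul, map_pow, valuation_four, hu, mul_one] at h
    exact eq_of_div_eq_one h
  have hs : v s < v 2 := by
    refine lt_of_pow_lt_pow_left₀ 3 zero_le ?_
    calc v s ^ 3 = v 2 ^ 2 * (v s * v t) := by rw [pow_succ, hs_sq, mul_assoc, mul_comm (v t)]
      _ < v 2 ^ 2 * v 2 ^ 3 := by gcongr
      _ ≤ v 2 ^ 3 := mul_le_of_le_one_left' (pow_le_one₀ zero_le hv2)
  have ht : v t < v 2 := by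
    refine lt_of_pow_lt_pow_left₀ 3 zero_le (lt_of_mul_lt_mul_left ?_ h2.le)
    calc v 2 ^ 2 * v t ^ 3 = (v s * v t) ^ 2 := by
          rw [pow_succ' (v t), ← mul_assoc, ← hs_sq, mul_pow]
      _ < (v 2 ^ 3) ^ 2 := pow_lt_pow_left₀ hst zero_le two_ne_zero
      _ = v 2 ^ 2 * v 2 ^ 4 := by rw [← pow_mul, ← pow_add]
      _ ≤ v 2 ^ 2 * v 2 ^ 3 :=
          mul_le_mul_right (pow_le_pow_of_le_one zero_le hv2 (by norm_num)) _
  have hts : v (t - s) < v 2 := v.map_sub_lt ht hs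
  exact hts.ne (congrArg v (by ring))

end Valuation

section Torsion

variable {K Γ₀ : Type*} [Field K] [LinearOrderedCommGroupWithZero Γ₀] {v : Valuation K Γ₀} {g : K}

/-- The value `v (x(P) / g)` for a point `P` of `y² = x³ + g²x`; the point at infinity gets the
junk value `0`. -/
def valX (v : Valuation K Γ₀) (g : K) : (quarticTwist (g ^ 2)).toAffine.Point → Γ₀
  | .zero => 0
  | .some x _ _ => v (x / g)

lemma Y_ne_zero_of_valuation_ne_one (hg : g ≠ 0) {x y : K}
    (h : (quarticTwist (g ^ 2)).toAffine.Nonsingular x y) (hx : x ≠ 0) (hv : v (x / g) ≠ 1) :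
    y ≠ 0 := by
  rintro rfl
  have hxg : x ^ 2 = -g ^ 2 := by
    apply mul_left_cancel₀ hx
    linear_combination -quarticTwist_equation_iff.1 h.1
  have hsq : v (x / g) ^ 2 = 1 := by
    rw [← map_pow, div_pow, hxg, neg_div, div_self (pow_ne_zero 2 hg), Valuation.map_neg, map_one]
  exact hv ((pow_eq_one_iff_of_nonneg zero_le two_ne_zero).1 hsq)

variable [NeZero (2 : K)] [DecidableEq K]

lemma valX_lt_valX_two_nsmul (hg : g ≠ 0) (hv2 : v 2 < 1)
    {P : (quarticTwist (g ^ 2)).toAffine.Point} (hP : 1 < valX v g P) :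
    valX v g P < valX v g (2 • P) := by
  rcases P with _ | ⟨x, y, h⟩
  · exact absurd hP not_lt_zero
  have hu : 1 < v (x / g) := hP
  have hx : x ≠ 0 := by rintro rfl; simp at hu
  obtain ⟨x', y', h', h2P, hx'⟩ := exists_two_nsmul_some_eq_doubleX hg h
    (Y_ne_zero_of_valuation_ne_one hg h hx hu.ne')
  have h2 : 0 < v 2 ^ 2 := pow_pos ((v.pos_iff).2 two_ne_zero) 2
  calc v (x / g) < v (x / g) / v 2 ^ 2 := by
        rw [lt_div_iff₀ h2]
        exact mul_lt_of_lt_one_right (zero_lt_one.trans hu) (pow_lt_one₀ zero_le hv2 two_ne_zero)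
    _ = valX v g (2 • .some x y h) := by
        rw [h2P, valX, hx', valuation_doubleX_of_one_lt v hu]

lemma not_isOfFinAddOrder_of_one_lt_valX (hg : g ≠ 0) (hv2 : v 2 < 1)
    {P : (quarticTwist (g ^ 2)).toAffine.Point} (hP : 1 < valX v g P) : ¬ IsOfFinAddOrder P :=
  not_isOfFinAddOrder_of_lt_two_nsmul (f := valX v g) (fun _ ↦ valX_lt_valX_two_nsmul hg hv2) hP

lemma X_eq_zero_or_valuation_eq_one_of_isOfFinAddOrder (hg : g ≠ 0) (hv2 : v 2 < 1) {x y : K}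
    {h : (quarticTwist (g ^ 2)).toAffine.Nonsingular x y}
    (hP : IsOfFinAddOrder (Affine.Point.some x y h)) : x = 0 ∨ v (x / g) = 1 := by
  by_contra! ⟨hx, hu⟩
  have hu0 : 0 < v (x / g) := (v.pos_iff).2 (div_ne_zero hx hg)
  rcases hu.lt_or_gt with hu_lt | hu_gt
  · obtain ⟨x', y', h', h2P, hx'⟩ := exists_two_nsmul_some_eq_doubleX hg h
      (Y_ne_zero_of_valuation_ne_one hg h hx hu)
    refine not_isOfFinAddOrder_of_one_lt_valX (v := v) hg hv2 ?_ (hP.nsmul (n := 2))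
    rw [h2P, valX, hx', valuation_doubleX_of_lt_one v hu_lt,
      one_lt_inv₀ (mul_pos (pow_pos ((v.pos_iff).2 two_ne_zero) 2) hu0)]
    exact mul_lt_one' (pow_lt_one₀ zero_le hv2 two_ne_zero) hu_lt
  · exact not_isOfFinAddOrder_of_one_lt_valX (P := .some x y h) hg hv2 hu_gt hP

lemma two_nsmul_eq_zero_or_eq_originPoint_of_isOfFinAddOrder (hg : g ≠ 0) (hv2 : v 2 < 1)
    (hv : ∀ u, v u = 1 → v (u ^ 4 - 1) < v 2 ^ 3) {P : (quarticTwist (g ^ 2)).toAffine.Point}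
    (hP : IsOfFinAddOrder P) : 2 • P = 0 ∨ 2 • P = originPoint hg := by
  rcases P with _ | ⟨x, y, h⟩
  · exact .inl (nsmul_zero 2)
  by_cases hy : y = 0
  · subst hy
    exact .inl (two_nsmul_some_zero h)
  obtain ⟨x', y', h', h2P, hx'⟩ := exists_two_nsmul_some_eq_doubleX hg h hy
  have h2P_fin : IsOfFinAddOrder (Affine.Point.some x' y' h') := h2P ▸ hP.nsmul
  rcases X_eq_zero_or_valuation_eq_one_of_isOfFinAddOrder hg hv2 h2P_fin with rfl | hu'
  · exact .inr (h2P.trans (some_zero_eq_originPoint hg h'))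
  rcases X_eq_zero_or_valuation_eq_one_of_isOfFinAddOrder hg hv2 hP with rfl | hu
  · exact absurd (by simpa using quarticTwist_equation_iff.1 h.1) hy
  · exact absurd (hx' ▸ hu') (valuation_doubleX_ne_one v hu (hv _ hu))

theorem nonempty_torsion_addEquiv_of_isSquare (hg : g ≠ 0) {i : K} (hi : i ^ 2 = -1)
    (hv2 : v 2 < 1) (hv : ∀ u, v u = 1 → v (u ^ 4 - 1) < v 2 ^ 3) (hsq : IsSquare (2 * g ^ 3)) :
    Nonempty (AddCommGroup.torsion (quarticTwist (g ^ 2)).toAffine.Point ≃+ ZMod 2 × ZMod 4) := by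
  obtain ⟨p, hp⟩ := (exists_two_nsmul_eq_originPoint_iff hg hi).2 hsq
  exact nonempty_torsion_addEquiv_zmod_two_prod_zmod_four (addOrderOf_some_zero _)
    (addOrderOf_some_zero _) (originPoint_ne_imaginaryPoint hg hi) hp
    (fun _ ↦ mem_zmultiples_sup_zmultiples_of_two_nsmul_eq_zero hg hi)
    (fun _ ↦ two_nsmul_eq_zero_or_eq_originPoint_of_isOfFinAddOrder hg hv2 hv)

theorem nonempty_torsion_addEquiv_of_not_isSquare (hg : g ≠ 0) {i : K} (hi : i ^ 2 = -1)
    (hv2 : v 2 < 1) (hv : ∀ u, v u = 1 → v (u ^ 4 - 1) < v 2 ^ 3) (hsq : ¬ IsSquare (2 * g ^ 3)) :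
    Nonempty (AddCommGroup.torsion (quarticTwist (g ^ 2)).toAffine.Point ≃+ ZMod 2 × ZMod 2) :=
  nonempty_torsion_addEquiv_zmod_two_prod_zmod_two (addOrderOf_some_zero _)
    (addOrderOf_some_zero _) (originPoint_ne_imaginaryPoint hg hi)
    (fun _ ↦ mem_zmultiples_sup_zmultiples_of_two_nsmul_eq_zero hg hi)
    fun P hP ↦ (two_nsmul_eq_zero_or_eq_originPoint_of_isOfFinAddOrder hg hv2 hv hP).resolve_right
      fun hP2 ↦ hsq ((exists_two_nsmul_eq_originPoint_iff hg hi).1 ⟨P, hP2⟩)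

end Torsion

section GaussianArithmetic

open IsDedekindDomain

lemma gi_sq : gi ^ 2 = -1 := by decide

lemma one_add_gi_sq : (1 + gi) ^ 2 = 2 * gi := by decide

lemma one_add_gi_dvd_iff {a : GaussianInt} : 1 + gi ∣ a ↔ Even (a.re + a.im) := by
  constructor
  · rintro ⟨c, rfl⟩
    exact ⟨c.re, by simp [gi]⟩
  · rintro ⟨k, hk⟩
    refine ⟨⟨k, a.im - k⟩, Zsqrtd.ext ?_ ?_⟩
    · simpa [gi, add_sub_assoc] using eq_sub_of_add_eq hk
    · simp [gi]

lemma prime_one_add_gi : Prime (1 + gi) := by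
  refine ⟨by decide, fun h ↦ ?_, fun a b h ↦ ?_⟩
  · exact absurd (one_add_gi_dvd_iff.1 (h.dvd (a := 1))) (by decide)
  · simp only [one_add_gi_dvd_iff, Zsqrtd.re_mul, Zsqrtd.im_mul, Int.even_add, Int.even_mul,
      even_neg] at h ⊢
    tauto

lemma exists_eq_add_two_mul_of_not_one_add_gi_dvd {a : GaussianInt} (ha : ¬ 1 + gi ∣ a) :
    ∃ c, a = 1 + 2 * c ∨ a = gi + 2 * c := by
  rw [one_add_gi_dvd_iff] at ha
  refine ⟨⟨a.re / 2, a.im / 2⟩, ?_⟩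
  rcases Int.even_or_odd a.re with hre | hre
  · have him : Odd a.im := by grind
    right
    ext
    · simpa [gi] using (Int.two_mul_ediv_two_of_even hre).symm
    · simpa [gi] using (mul_comm 2 (a.im / 2) ▸ Int.add_one_ediv_two_mul_two_of_odd him).symm
  · have him : Even a.im := by grind
    left
    ext
    · simpa using (mul_comm 2 (a.re / 2) ▸ Int.add_one_ediv_two_mul_two_of_odd hre).symm
    · simpa using (Int.two_mul_ediv_two_of_even him).symm

lemma eight_mul_one_add_gi_dvd_pow_four_sub_one {a : GaussianInt} (ha : ¬ 1 + gi ∣ a) :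
    8 * (1 + gi) ∣ a ^ 4 - 1 := by
  obtain ⟨ε, c, hε, hε4, rfl⟩ : ∃ ε c, ¬ 1 + gi ∣ ε ∧ ε ^ 4 = 1 ∧ a = ε + 2 * c := by
    obtain ⟨c, rfl | rfl⟩ := exists_eq_add_two_mul_of_not_one_add_gi_dvd ha
    · exact ⟨1, c, by rw [one_add_gi_dvd_iff]; decide, by decide, rfl⟩
    · exact ⟨gi, c, by rw [one_add_gi_dvd_iff]; decide, by decide, rfl⟩
  obtain ⟨d, hd⟩ : 1 + gi ∣ c * (c + ε) := by
    rw [prime_one_add_gi.dvd_mul]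
    simp only [one_add_gi_dvd_iff, Zsqrtd.re_add, Zsqrtd.im_add, Int.even_add] at hε ⊢
    tauto
  refine ⟨d * (ε ^ 2 + 2 * (c * (c + ε))), ?_⟩
  linear_combination hε4 + 8 * (ε ^ 2 + 2 * (c * (c + ε))) * hd

/-- The prime `(1 + i)` of `ℤ[i]` above `2`. -/
def primeAboveTwo : HeightOneSpectrum GaussianInt where
  asIdeal := Ideal.span {1 + gi}
  isPrime := (Ideal.span_singleton_prime prime_one_add_gi.ne_zero).2 prime_one_add_gi
  ne_bot := by simpa using prime_one_add_gi.ne_zero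

variable {K : Type*} [Field K] [Algebra GaussianInt K] [IsFractionRing GaussianInt K]

lemma valuation_primeAboveTwo_two_lt_one : primeAboveTwo.valuation K 2 < 1 := by
  rw [← map_ofNat (algebraMap GaussianInt K), HeightOneSpectrum.valuation_lt_one_iff_mem]
  exact Ideal.mem_span_singleton.2 (one_add_gi_dvd_iff.2 (by decide))

lemma valuation_primeAboveTwo_pow_four_sub_pow_four_lt {a b : GaussianInt} (ha : ¬ 1 + gi ∣ a)
    (hb : ¬ 1 + gi ∣ b) :
    primeAboveTwo.valuation K (algebraMap _ K a ^ 4 - algebraMap _ K b ^ 4) <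
      primeAboveTwo.valuation K 2 ^ 3 := by
  obtain ⟨c, hc⟩ := dvd_sub (eight_mul_one_add_gi_dvd_pow_four_sub_one ha)
    (eight_mul_one_add_gi_dvd_pow_four_sub_one hb)
  have hπc : primeAboveTwo.valuation K (algebraMap _ K ((1 + gi) * c)) < 1 :=
    (primeAboveTwo.valuation_lt_one_iff_mem _).2
      (Ideal.mem_span_singleton.2 (dvd_mul_right _ c))
  have hab : a ^ 4 - b ^ 4 = 2 ^ 3 * ((1 + gi) * c) := by linear_combination hc
  have h2 : algebraMap GaussianInt K 2 ≠ 0 :=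
    (map_ne_zero_iff _ (IsFractionRing.injective GaussianInt K)).2 (by decide)
  have h2_pos : 0 < primeAboveTwo.valuation K (algebraMap GaussianInt K 2) ^ 3 :=
    pow_pos ((Valuation.pos_iff _).2 h2) 3
  rw [← map_pow, ← map_pow, ← map_sub, hab, map_mul, map_mul, map_pow, map_pow,
    ← map_ofNat (algebraMap GaussianInt K)]
  exact mul_lt_of_lt_one_right h2_pos hπc

lemma valuation_primeAboveTwo_pow_four_sub_one_lt {u : K} (hu : primeAboveTwo.valuation K u = 1) :
    primeAboveTwo.valuation K (u ^ 4 - 1) < primeAboveTwo.valuation K 2 ^ 3 := by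
  obtain ⟨n, ⟨d, hd⟩, hnd⟩ := primeAboveTwo.exists_primeCompl_mul_eq_of_integer u hu.le
  have hvd : primeAboveTwo.valuation K (algebraMap _ K d) = 1 :=
    primeAboveTwo.valuation_eq_one_iff_notMem.2 hd
  have hvn : primeAboveTwo.valuation K (algebraMap _ K n) = 1 := by
    rw [← hnd, map_mul, hu, hvd, mul_one]
  have hn := primeAboveTwo.valuation_eq_one_iff_notMem.1 hvn
  calc primeAboveTwo.valuation K (u ^ 4 - 1)
      = primeAboveTwo.valuation K ((u ^ 4 - 1) * algebraMap _ K d ^ 4) := by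
        rw [map_mul, map_pow, hvd, one_pow, mul_one]
    _ = primeAboveTwo.valuation K (algebraMap _ K n ^ 4 - algebraMap _ K d ^ 4) := by
        rw [← hnd]
        ring_nf
    _ < primeAboveTwo.valuation K 2 ^ 3 :=
        valuation_primeAboveTwo_pow_four_sub_pow_four_lt (mt Ideal.mem_span_singleton.2 hn)
          (mt Ideal.mem_span_singleton.2 hd)

lemma sq_eq_one_or_eq_neg_one_of_isUnit {w : GaussianInt} (hw : IsUnit w) :
    w ^ 2 = 1 ∨ w ^ 2 = -1 := by
  have hnorm : w.re ^ 2 + w.im ^ 2 = 1 := by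
    have := (Zsqrtd.norm_eq_one_iff' (by norm_num) w).2 hw
    rw [Zsqrtd.norm_def] at this
    linarith
  have hzero : w.re = 0 ∨ w.im = 0 := by
    by_contra! ⟨hre, him⟩
    linarith [sq_pos_of_ne_zero hre, sq_pos_of_ne_zero him]
  rcases hzero with hre | him
  · right
    ext
    · simp only [sq, Zsqrtd.re_mul, hre, Zsqrtd.re_neg, Zsqrtd.re_one] at hnorm ⊢
      linarith
    · simp [sq, hre]
  · left
    ext
    · simp only [sq, Zsqrtd.re_mul, him, Zsqrtd.re_one] at hnorm ⊢
      linarith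
    · simp [sq, him]

lemma eq_gi_or_eq_neg_gi_of_isSquare {γ : GaussianInt} (hγ : Squarefree γ)
    (hsq : IsSquare (2 * algebraMap _ K γ ^ 3)) : γ = gi ∨ γ = -gi := by
  obtain ⟨y, hy⟩ := hsq
  have hden : algebraMap _ K ((1 + gi) * γ) ≠ 0 :=
    (map_ne_zero_iff _ (IsFractionRing.injective GaussianInt K)).2
      (mul_ne_zero prime_one_add_gi.ne_zero hγ.ne_zero)
  have hy_sq : (y / algebraMap _ K ((1 + gi) * γ)) ^ 2 = algebraMap _ K (-gi * γ) := by
    rw [div_pow, div_eq_iff (pow_ne_zero 2 hden), sq y, ← hy,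
      ← map_ofNat (algebraMap GaussianInt K)]
    simp only [← map_mul, ← map_pow]
    congr 1
    linear_combination gi * γ ^ 3 * one_add_gi_sq + 2 * γ ^ 3 * gi_sq
  obtain ⟨w, hw⟩ : ∃ w, algebraMap GaussianInt K w = y / algebraMap _ K ((1 + gi) * γ) :=
    IsIntegrallyClosed.exists_algebraMap_eq_of_isIntegral_pow two_pos
      (hy_sq ▸ isIntegral_algebraMap)
  have hγw : γ = gi * w ^ 2 := by
    have hw_sq : w ^ 2 = -gi * γ := by
      apply IsFractionRing.injective GaussianInt K
      rw [map_pow, hw, hy_sq]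
    linear_combination γ * gi_sq - gi * hw_sq
  have hw_unit : IsUnit w := hγ w ⟨gi, by rw [hγw]; ring⟩
  rcases sq_eq_one_or_eq_neg_one_of_isUnit hw_unit with hw1 | hw1 <;> simp [hγw, hw1]

theorem isSquare_two_mul_pow_three_iff {γ : GaussianInt} (hγ : Squarefree γ) :
    IsSquare (2 * algebraMap _ K γ ^ 3) ↔ γ = gi ∨ γ = -gi := by
  refine ⟨eq_gi_or_eq_neg_gi_of_isSquare hγ, fun h ↦ ?_⟩
  have hsq : IsSquare (2 * γ ^ 3) := by
    rcases h with rfl | rfl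
    · exact ⟨1 - gi, by decide⟩
    · exact ⟨1 + gi, by decide⟩
  simpa only [map_mul, map_pow, map_ofNat] using hsq.map (algebraMap GaussianInt K)

end GaussianArithmetic

section GaussianField

lemma QIi_sq : QIi ^ 2 = -1 := Subtype.ext (by simp [QIi])

/-- The embedding `toQI : ℤ[i] → ℚ(i)` as a ring homomorphism. -/
def toQIHom : GaussianInt →+* QI :=
  Zsqrtd.lift ⟨QIi, by rw [← sq, QIi_sq, Int.cast_neg, Int.cast_one]⟩

lemma toQI_eq_toQIHom (z : GaussianInt) : toQI z = toQIHom z := rfl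

lemma toQIHom_injective : Function.Injective toQIHom :=
  Zsqrtd.lift_injective _ fun n h ↦ by nlinarith [mul_self_nonneg n]

lemma coe_toQIHom (z : GaussianInt) : (toQIHom z : ℂ) = GaussianInt.toComplex z := by
  simp [← toQI_eq_toQIHom, toQI, QIi, GaussianInt.toComplex_def]

instance : Algebra GaussianInt QI := toQIHom.toAlgebra

lemma exists_eq_toQIHom_div (z : QI) : ∃ a b, z = toQIHom a / toQIHom b := by
  let φ : FractionRing GaussianInt →+* ℂ := IsFractionRing.lift GaussianInt.toComplex_injective
  have hQI : QI ≤ φ.toRatAlgHom.fieldRange := by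
    refine IntermediateField.adjoin_simple_le_iff.2 ⟨algebraMap _ _ gi, ?_⟩
    simp [φ, GaussianInt.toComplex_def, gi]
  obtain ⟨w, hw⟩ := hQI z.2
  obtain ⟨a, b, -, rfl⟩ := IsFractionRing.div_surjective (A := GaussianInt) w
  refine ⟨a, b, Subtype.ext ?_⟩
  simpa [φ, coe_toQIHom] using hw.symm

instance : FaithfulSMul GaussianInt QI :=
  (faithfulSMul_iff_algebraMap_injective _ _).2 toQIHom_injective

instance : IsFractionRing GaussianInt QI :=
  .of_field GaussianInt QI fun z ↦ exists_eq_toQIHom_div z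

end GaussianField

/-- for squarefree `γ ∈ ℤ[i]`, the torsion subgroup of `E_{γ²}(ℚ(i))` is
`ℤ/2ℤ ⊕ ℤ/4ℤ` if `γ = ±i`, and `ℤ/2ℤ ⊕ ℤ/2ℤ` otherwise. -/
theorem stmt4 (γ : GaussianInt) (hγ : Squarefree γ) :
    (γ = gi ∨ γ = -gi →
      Nonempty ((AddCommGroup.torsion (Ecurve (toQI (γ ^ 2))).toAffine.Point) ≃+
        ZMod 2 × ZMod 4)) ∧
    (γ ≠ gi ∧ γ ≠ -gi →
      Nonempty ((AddCommGroup.torsion (Ecurve (toQI (γ ^ 2))).toAffine.Point) ≃+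
        ZMod 2 × ZMod 2)) := by
  have hcurve : Ecurve (toQI (γ ^ 2)) = quarticTwist (algebraMap _ QI γ ^ 2) := by
    rw [← map_pow]
    rfl
  have hγ0 : algebraMap _ QI γ ≠ 0 :=
    (map_ne_zero_iff _ toQIHom_injective).2 hγ.ne_zero
  have hsq := isSquare_two_mul_pow_three_iff (K := QI) hγ
  rw [hcurve, ← not_or, ← hsq]
  exact ⟨nonempty_torsion_addEquiv_of_isSquare hγ0 QIi_sq valuation_primeAboveTwo_two_lt_one
      fun _ ↦ valuation_primeAboveTwo_pow_four_sub_one_lt,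
    nonempty_torsion_addEquiv_of_not_isSquare hγ0 QIi_sq valuation_primeAboveTwo_two_lt_one
      fun _ ↦ valuation_primeAboveTwo_pow_four_sub_one_lt⟩
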